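/- Let k be a field and X a type; in F := FreeLieAlgebra k (X ⊕ X), write x̄ := ι(Sum.inl x) and ẋ := ι(Sum.inr x). For each pair (x, l) ∈ X × List X define the left-normed element w(x, l) := List.foldl (fun u y => ⁅u, ȳ⁆) ẋ l, i.e. the iterated bracket ⁅…⁅⁅ẋ, x̄₂⁆, x̄₃⁆, …, x̄ₙ⁆. Then the family (w(x, l))_{(x,l) ∈ X × List X} is linearly independent over k. -/

import Mathlib

attribute [local instance] LieRing.ofAssociativeRing

/-- The action of the generators on the module spanned by `none` and the pairs `(x, l)`. -/
noncomputable def lnwGen (k : Type*) [Field k] (X : Type*) :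
    X ⊕ X → Module.End k (Option (X × List X) →₀ k)
  | Sum.inl y => Finsupp.linearCombination k fun o : Option (X × List X) =>
      o.elim 0 fun p => Finsupp.single (some (p.1, p.2 ++ [y])) (1 : k)
  | Sum.inr x => Finsupp.linearCombination k fun o : Option (X × List X) =>
      o.elim (Finsupp.single (some (x, [])) (1 : k)) fun _ => 0

theorem lnw_eval (k : Type*) [Field k] (X : Type*) (x : X) (l : List X) :
    FreeLieAlgebra.lift k (lnwGen k X)
      (List.foldl (fun (u : FreeLieAlgebra k (X ⊕ X)) (y : X) =>
        ⁅u, FreeLieAlgebra.of k (Sum.inl y)⁆) (FreeLieAlgebra.of k (Sum.inr x)) l)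
      (Finsupp.single none 1) = ((-1 : kˣ) ^ l.length) • Finsupp.single (some (x, l)) (1 : k) := by
  induction l using List.reverseRecOn with
  | nil => simp [FreeLieAlgebra.lift_of_apply, lnwGen]
  | append_singleton l y ih =>
    rw [List.foldl_append, List.foldl_cons, List.foldl_nil, LieHom.map_lie,
      FreeLieAlgebra.lift_of_apply, LieRing.of_associative_ring_bracket, LinearMap.sub_apply,
      Module.End.mul_apply, Module.End.mul_apply, ih]
    simp [lnwGen, Units.smul_def, pow_succ]

/-- In `FreeLieAlgebra k (X ⊕ X)`, the left-normed bracket words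
`⁅…⁅⁅ẋ, x̄₂⁆, x̄₃⁆, …, x̄ₙ⁆` beginning with a dotted generator followed by plain generators are
linearly independent. -/
theorem left_normed_words_linearIndependent (k : Type*) [Field k] (X : Type*) :
    LinearIndependent k fun p : X × List X =>
      List.foldl (fun (u : FreeLieAlgebra k (X ⊕ X)) (y : X) => ⁅u, FreeLieAlgebra.of k (Sum.inl y)⁆)
        (FreeLieAlgebra.of k (Sum.inr p.1)) p.2 := by
  let Φ : FreeLieAlgebra k (X ⊕ X) →ₗ[k] (Option (X × List X) →₀ k) :=
    (LinearMap.applyₗ (Finsupp.single (none : Option (X × List X)) (1 : k))).comp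
      (FreeLieAlgebra.lift k (lnwGen k X)).toLinearMap
  refine LinearIndependent.of_comp Φ ?_
  have h : LinearIndependent k fun p : X × List X =>
      (Finsupp.single (some p) (1 : k) : Option (X × List X) →₀ k) :=
    (Finsupp.linearIndependent_single_one k (Option (X × List X))).comp some
      (Option.some_injective _)
  convert h.units_smul (fun p => (-1 : kˣ) ^ p.2.length) using 1
  funext p
  exact lnw_eval k X p.1 p.2
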